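/- Let h = a·r₁ + b·r₂ where r₁ is the rank function of U^{123}_{2,3} and r₂ that of U^{12}_{1,2} on N_4, with a, b ≥ 0. Then h is entropic if and only if a + b ≥ log⌈2^a⌉. -/

import Mathlib

open Finset

/-- Probability that the discrete random variable `Y` (on finite sample space `Ω`
with pmf `p`) takes the value `s`. -/
noncomputable def pr {Ω : Type} [Fintype Ω] {S : Type} [DecidableEq S]
    (p : Ω → ℝ) (Y : Ω → S) (s : S) : ℝ := ∑ ω, if Y ω = s then p ω else 0

/-- Shannon entropy (base 2) of the discrete random variable `Y`. -/
noncomputable def ent {Ω : Type} [Fintype Ω] {S : Type} [DecidableEq S]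
    (p : Ω → ℝ) (Y : Ω → S) : ℝ :=
  - ∑ s ∈ Finset.univ.image Y, pr p Y s * Real.logb 2 (pr p Y s)

/-- `h : 2^{N_n} → ℝ` is entropic: it is the entropy function of some random
vector `(X_1, …, X_n)` on finite alphabets. -/
def IsEntropic (n : ℕ) (h : Finset (Fin n) → ℝ) : Prop :=
  ∃ (m : Fin n → ℕ) (p : (∀ i, Fin (m i)) → ℝ),
    (∀ x, 0 ≤ p x) ∧ (∑ x, p x) = 1 ∧
    ∀ A : Finset (Fin n), h A = ent p (fun x (i : A) => x i.1)

/-- Rank function of the matroid U^{B}_{k,|B|} on N₄ = {0,1,2,3}: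
A ↦ min(k, |A ∩ B|); elements outside B are loops. -/
noncomputable def rkU (k : ℕ) (B : Finset (Fin 4)) (A : Finset (Fin 4)) : ℝ :=
  min (k : ℝ) ((A ∩ B).card : ℝ)

/-!
For a random vector with entropy function `h`, the value of `h` on the subsets of `{0, 1, 2}` says
that `X₀` and `X₁` are each independent of `X₂` and that any two of `X₀, X₁, X₂` determine the
third. Fix a value `x` of positive probability. For every value `z` in the support of `X₂` the event
`X₀ = x, X₂ = z` has positive probability and determines a value `y z` of `X₁`, with
`P(X₁ = y z) = P(X₀ = x)`; distinct `z` give distinct `y z`, so `N * P(X₀ = x) ≤ 1`, where `N` is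
the size of the support of `X₂`. Hence `a = H(X₂) ≤ log N ≤ H(X₀) = a + b`, and `N` is an integer.

Conversely let `n = ⌈2 ^ a⌉`, let `U` be uniform on `ℤ/n` and `V` independent of `U` with entropy
`a ≤ log n`. The vector `(U, U + V, V, 0)` realizes `a r₁ + (log n - a) r₂`, and adding an
independent source, common to the first two coordinates, of entropy `a + b - log n` gives `h`.
-/

section Probability

variable {Ω S T R : Type} [DecidableEq S] [DecidableEq T] [DecidableEq R] {p : Ω → ℝ}

theorem ite_prod_le_ite (hp : ∀ ω, 0 ≤ p ω) (Y : Ω → S) (Z : Ω → T) (s : S) (t : T) (ω : Ω) :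
    (if (Y ω, Z ω) = (s, t) then p ω else 0) ≤ if Y ω = s then p ω else 0 := by
  by_cases hY : Y ω = s <;> by_cases hZ : Z ω = t <;> simp [hY, hZ, hp]

variable [Fintype Ω]

theorem sum_pr_mul_of_forall_mem (p : Ω → ℝ) {Y : Ω → S} {t : Finset S} (ht : ∀ ω, Y ω ∈ t)
    (F : S → ℝ) : ∑ s ∈ t, pr p Y s * F s = ∑ ω, p ω * F (Y ω) := by
  simp only [pr, sum_mul, ite_mul, zero_mul]
  rw [sum_comm]
  simp [ht]

theorem sum_pr_mul [Fintype S] (p : Ω → ℝ) (Y : Ω → S) (F : S → ℝ) :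
    ∑ s, pr p Y s * F s = ∑ ω, p ω * F (Y ω) :=
  sum_pr_mul_of_forall_mem p (fun _ => mem_univ _) F

theorem sum_pr [Fintype S] (p : Ω → ℝ) (Y : Ω → S) : ∑ s, pr p Y s = ∑ ω, p ω := by
  simpa using sum_pr_mul p Y 1

theorem pr_id [DecidableEq Ω] (p : Ω → ℝ) : pr p id = p := by
  ext ω
  simp [pr]

theorem pr_pr [Fintype S] (p : Ω → ℝ) (Y : Ω → S) (Z : S → T) :
    pr (pr p Y) Z = pr p (Z ∘ Y) := by
  ext t
  simpa [pr] using sum_pr_mul p Y fun s => if Z s = t then 1 else 0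

theorem pr_nonneg (hp : ∀ ω, 0 ≤ p ω) (Y : Ω → S) (s : S) : 0 ≤ pr p Y s :=
  sum_nonneg fun ω _ => by split_ifs <;> simp [hp]

theorem sum_pr_le (hp : ∀ ω, 0 ≤ p ω) (Y : Ω → S) (t : Finset S) :
    ∑ s ∈ t, pr p Y s ≤ ∑ ω, p ω := by
  simp only [pr]
  rw [sum_comm]
  refine sum_le_sum fun ω _ => ?_
  rw [sum_ite_eq]
  split_ifs <;> simp [hp]

theorem pr_pos (hp : ∀ ω, 0 ≤ p ω) (Y : Ω → S) {ω : Ω} (hω : 0 < p ω) : 0 < pr p Y (Y ω) :=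
  sum_pos' (fun ω' _ => by split_ifs <;> simp [hp]) ⟨ω, mem_univ ω, by simpa using hω⟩

theorem exists_pos_of_pr_pos {Y : Ω → S} {s : S} (h : 0 < pr p Y s) : ∃ ω, 0 < p ω ∧ Y ω = s := by
  contrapose! h
  exact sum_nonpos fun ω _ => by
    split_ifs with hω
    · exact not_lt.1 fun hpos => h ω hpos hω
    · exact le_rfl

theorem pr_mem_stdSimplex [Fintype S] (hp : p ∈ stdSimplex ℝ Ω) (Y : Ω → S) :
    pr p Y ∈ stdSimplex ℝ S :=
  ⟨pr_nonneg hp.1 Y, (sum_pr p Y).trans hp.2⟩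

theorem pr_eq_pr_of_iff (hp : ∀ ω, 0 ≤ p ω) {Y : Ω → S} {Z : Ω → T} {s : S} {t : T}
    (h : ∀ ω, 0 < p ω → (Y ω = s ↔ Z ω = t)) : pr p Y s = pr p Z t := by
  refine sum_congr rfl fun ω _ => ?_
  rcases (hp ω).eq_or_lt with h0 | hpos
  · simp [← h0]
  · simp [h ω hpos]

theorem pr_prod_le (hp : ∀ ω, 0 ≤ p ω) (Y : Ω → S) (Z : Ω → T) (s : S) (t : T) :
    pr p (fun ω => (Y ω, Z ω)) (s, t) ≤ pr p Y s :=
  sum_le_sum fun ω _ => ite_prod_le_ite hp Y Z s t ω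

theorem eq_of_pr_prod_eq (hp : ∀ ω, 0 ≤ p ω) {Y : Ω → S} {Z : Ω → T} {s : S} {t : T}
    (h : pr p (fun ω => (Y ω, Z ω)) (s, t) = pr p Y s) {ω : Ω} (hω : 0 < p ω) (hY : Y ω = s) :
    Z ω = t := by
  have hterm := (sum_eq_sum_iff_of_le fun ω _ => ite_prod_le_ite hp Y Z s t ω).1 h ω (mem_univ ω)
  by_contra hZ
  simp [hY, hZ, hω.ne] at hterm

/-- The support of the law of `Y`: the values it takes with positive probability. -/
noncomputable def supp [Fintype S] (p : Ω → ℝ) (Y : Ω → S) : Finset S := {s | 0 < pr p Y s}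

theorem mem_supp [Fintype S] {Y : Ω → S} {s : S} : s ∈ supp p Y ↔ 0 < pr p Y s := by
  simp [supp]

theorem supp_nonempty [Fintype S] (hp : p ∈ stdSimplex ℝ Ω) (Y : Ω → S) : (supp p Y).Nonempty := by
  obtain ⟨s, -, hs⟩ := exists_lt_of_sum_lt (s := univ) (f := 0) (g := pr p Y)
    (by simp [sum_pr, hp.2])
  exact ⟨s, mem_supp.2 hs⟩

/-- `Y` determines `Z` almost surely, that is, `Z` is a function of `Y` on the sample points of
positive mass. -/
def Determines (p : Ω → ℝ) (Y : Ω → S) (Z : Ω → T) : Prop :=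
  ∀ ⦃ω ω'⦄, 0 < p ω → 0 < p ω' → Y ω = Y ω' → Z ω = Z ω'

/-- `Y` and `Z` are independent: their joint law is the product of the marginals. -/
def Independent (p : Ω → ℝ) (Y : Ω → S) (Z : Ω → T) : Prop :=
  ∀ s t, pr p (fun ω => (Y ω, Z ω)) (s, t) = pr p Y s * pr p Z t

theorem pr_eq_pr_of_independent_of_determines (hp : ∀ ω, 0 ≤ p ω)
    {X : Ω → S} {Y : Ω → T} {Z : Ω → R}
    (hXZ : Independent p X Z) (hYZ : Independent p Y Z)
    (hXZ_Y : Determines p (fun ω => (X ω, Z ω)) Y) (hYZ_X : Determines p (fun ω => (Y ω, Z ω)) X)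
    {ω : Ω} (hω : 0 < p ω) : pr p X (X ω) = pr p Y (Y ω) := by
  have hjoint : pr p (fun ω => (X ω, Z ω)) (X ω, Z ω) = pr p (fun ω => (Y ω, Z ω)) (Y ω, Z ω) :=
    pr_eq_pr_of_iff hp fun ω' hω' =>
      ⟨fun h => Prod.ext (hXZ_Y hω' hω h) (Prod.ext_iff.1 h).2,
        fun h => Prod.ext (hYZ_X hω' hω h) (Prod.ext_iff.1 h).2⟩
  rw [hXZ, hYZ] at hjoint
  exact mul_right_cancel₀ (pr_pos hp Z hω).ne' hjoint

end Probability

section Gibbs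

open InformationTheory

variable {ι : Type*} [Fintype ι] {c : ℝ} {w v : ι → ℝ}

theorem mul_klFun_div {x y : ℝ} (h : y = 0 → x = 0) :
    y * klFun (x / y) = x * (Real.log x - Real.log y) + (y - x) := by
  rcases eq_or_ne y 0 with rfl | hy
  · simp [h rfl]
  rcases eq_or_ne x 0 with rfl | hx
  · simp [klFun_zero]
  rw [klFun_apply, Real.log_div hx hy]
  field_simp
  ring

theorem sum_mul_logb_sub_logb (c : ℝ) (hwv : ∀ i, v i = 0 → w i = 0)
    (hsum : ∑ i, v i = ∑ i, w i) :
    ∑ i, w i * (Real.logb c (w i) - Real.logb c (v i)) =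
      (∑ i, v i * klFun (w i / v i)) / Real.log c := by
  simp only [mul_klFun_div (hwv _), sum_add_distrib, sum_sub_distrib, hsum, sub_self, add_zero,
    sum_div, Real.logb]
  exact sum_congr rfl fun i _ => by ring

theorem gibbs_inequality (hc : 1 < c) (hw : ∀ i, 0 ≤ w i) (hv : ∀ i, 0 ≤ v i)
    (hwv : ∀ i, v i = 0 → w i = 0) (hsum : ∑ i, v i = ∑ i, w i) :
    ∑ i, w i * Real.logb c (v i) ≤ ∑ i, w i * Real.logb c (w i) := by
  rw [← sub_nonneg, ← sum_sub_distrib]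
  simp only [← mul_sub]
  rw [sum_mul_logb_sub_logb c hwv hsum]
  exact div_nonneg (sum_nonneg fun i _ => mul_nonneg (hv i)
    (klFun_nonneg (div_nonneg (hw i) (hv i)))) (Real.log_pos hc).le

theorem eq_of_gibbs_equality (hc : 1 < c) (hw : ∀ i, 0 ≤ w i) (hv : ∀ i, 0 ≤ v i)
    (hwv : ∀ i, v i = 0 → w i = 0) (hsum : ∑ i, v i = ∑ i, w i)
    (heq : ∑ i, w i * Real.logb c (v i) = ∑ i, w i * Real.logb c (w i)) : w = v := by
  have hdiv : (∑ i, v i * klFun (w i / v i)) / Real.log c = 0 := by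
    rw [← sum_mul_logb_sub_logb c hwv hsum]
    simp only [mul_sub, sum_sub_distrib, heq, sub_self]
  have hzero : ∑ i, v i * klFun (w i / v i) = 0 :=
    (div_eq_zero_iff.1 hdiv).resolve_right (Real.log_pos hc).ne'
  have hnonneg (i) : 0 ≤ w i / v i := div_nonneg (hw i) (hv i)
  ext i
  have hterm := (sum_eq_zero_iff_of_nonneg fun i _ =>
    mul_nonneg (hv i) (klFun_nonneg (hnonneg i))).1 hzero i (mem_univ i)
  rcases mul_eq_zero.1 hterm with hvi | hkl
  · rw [hvi, hwv i hvi]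
  · exact eq_of_div_eq_one ((klFun_eq_zero_iff (hnonneg i)).1 hkl)

end Gibbs

section Entropy

variable {Ω Ω' S T : Type} [Fintype Ω] [Fintype Ω'] [DecidableEq S] [DecidableEq T]

theorem ent_eq_neg_sum (p : Ω → ℝ) (Y : Ω → S) :
    ent p Y = -∑ ω, p ω * Real.logb 2 (pr p Y (Y ω)) := by
  rw [ent, sum_pr_mul_of_forall_mem p (fun ω => mem_image_of_mem Y (mem_univ ω))
    fun s => Real.logb 2 (pr p Y s)]

theorem ent_eq_sum_negMulLog [Fintype S] (p : Ω → ℝ) (Y : Ω → S) :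
    ent p Y = (∑ s, Real.negMulLog (pr p Y s)) / Real.log 2 := by
  rw [ent_eq_neg_sum, ← sum_pr_mul p Y fun s => Real.logb 2 (pr p Y s), ← sum_neg_distrib, sum_div]
  exact sum_congr rfl fun s _ => by rw [Real.negMulLog, Real.logb]; ring

theorem ent_congr (p : Ω → ℝ) {Y : Ω → S} {Z : Ω → T}
    (h : ∀ ω ω', Y ω = Y ω' ↔ Z ω = Z ω') : ent p Y = ent p Z := by
  simp only [ent_eq_neg_sum, pr, h]

theorem ent_restrict_congr {ι : Type} {R : ι → Type} [∀ i, DecidableEq (R i)] (p : Ω → ℝ)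
    (X : ∀ i, Ω → R i) {A : Finset ι} {Z : Ω → T}
    (h : ∀ ω ω', (∀ i ∈ A, X i ω = X i ω') ↔ Z ω = Z ω') :
    ent p (fun ω (i : A) => X i ω) = ent p Z :=
  ent_congr p fun ω ω' => by simpa [funext_iff] using h ω ω'

theorem ent_pr [Fintype S] (p : Ω → ℝ) (Y : Ω → S) (Z : S → T) :
    ent (pr p Y) Z = ent p (Z ∘ Y) := by
  rw [ent_eq_neg_sum, ent_eq_neg_sum, pr_pr,
    sum_pr_mul p Y fun s => Real.logb 2 (pr p (Z ∘ Y) (Z s))]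
  rfl

theorem ent_eq_ent_id_of_pr_eq [Fintype S] {p : Ω → ℝ} {Y : Ω → S} {q : S → ℝ}
    (h : pr p Y = q) : ent p Y = ent q id := by
  rw [← h, ent_pr, Function.id_comp]

theorem ent_const {p : Ω → ℝ} (hp : ∑ ω, p ω = 1) (s : S) : ent p (fun _ => s) = 0 := by
  simp [ent_eq_neg_sum, pr, hp]

/-- The uniform law on a finite nonempty type. -/
noncomputable def uniformLaw (Ω : Type) [Fintype Ω] : Ω → ℝ := fun _ => (Fintype.card Ω : ℝ)⁻¹

theorem uniformLaw_mem_stdSimplex [Nonempty Ω] : uniformLaw Ω ∈ stdSimplex ℝ Ω :=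
  ⟨fun _ => by unfold uniformLaw; positivity, by simp [uniformLaw]⟩

theorem ent_uniformLaw_id [Nonempty Ω] [DecidableEq Ω] :
    ent (uniformLaw Ω) id = Real.logb 2 (Fintype.card Ω) := by
  simp [ent_eq_neg_sum, pr_id, uniformLaw]

theorem ent_le_logb_card_supp [Fintype S] {p : Ω → ℝ} (hp : p ∈ stdSimplex ℝ Ω) (Y : Ω → S) :
    ent p Y ≤ Real.logb 2 #(supp p Y) := by
  obtain ⟨hpr, hpr_sum⟩ := pr_mem_stdSimplex hp Y
  have hcard : (#(supp p Y) : ℝ) ≠ 0 := by simpa using (supp_nonempty hp Y).ne_empty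
  have off_supp {s} (hs : s ∉ supp p Y) : pr p Y s = 0 :=
    (not_lt.1 fun h => hs (mem_supp.2 h)).antisymm (hpr s)
  let u (s : S) : ℝ := if s ∈ supp p Y then (#(supp p Y) : ℝ)⁻¹ else 0
  have hgibbs : ∑ s, pr p Y s * Real.logb 2 (u s) ≤ ∑ s, pr p Y s * Real.logb 2 (pr p Y s) := by
    refine gibbs_inequality one_lt_two hpr (fun s => ?_) (fun s hs => off_supp fun h => ?_) ?_
    · dsimp only [u]; positivity
    · simp [u, h, hcard] at hs
    · simp [u, hpr_sum, hcard]
  have hcross : ∑ s, pr p Y s * Real.logb 2 (u s) = -Real.logb 2 #(supp p Y) := by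
    rw [← Real.logb_inv, ← one_mul (Real.logb 2 _), ← hpr_sum, sum_mul]
    refine sum_congr rfl fun s _ => ?_
    by_cases hs : s ∈ supp p Y
    · simp only [u, if_pos hs]
    · simp only [off_supp hs, zero_mul]
  rw [hcross, sum_pr_mul p Y fun s => Real.logb 2 (pr p Y s)] at hgibbs
  rw [ent_eq_neg_sum]
  exact neg_le.1 hgibbs

theorem logb_le_ent {p : Ω → ℝ} (hp : p ∈ stdSimplex ℝ Ω) {Y : Ω → S} {c : ℝ} (hc : 0 < c)
    (h : ∀ ω, 0 < p ω → c * pr p Y (Y ω) ≤ 1) : Real.logb 2 c ≤ ent p Y := by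
  rw [ent_eq_neg_sum, ← sum_neg_distrib, ← one_mul (Real.logb 2 c), ← hp.2, sum_mul]
  refine sum_le_sum fun ω _ => ?_
  rcases (hp.1 ω).eq_or_lt with h0 | hω
  · simp [← h0]
  rw [← mul_neg, ← Real.logb_inv]
  have hpos := pr_pos hp.1 Y hω
  gcongr
  · exact one_lt_two
  · rw [← one_div, le_div_iff₀ hpos]
    exact h ω hω

theorem determines_of_ent_prod_eq {p : Ω → ℝ} (hp : ∀ ω, 0 ≤ p ω) {Y : Ω → S} {Z : Ω → T}
    (h : ent p (fun ω => (Y ω, Z ω)) = ent p Y) : Determines p Y Z := by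
  have hle (ω) (_ : ω ∈ univ) : p ω * Real.logb 2 (pr p (fun ω => (Y ω, Z ω)) (Y ω, Z ω)) ≤
      p ω * Real.logb 2 (pr p Y (Y ω)) := by
    rcases (hp ω).eq_or_lt with h0 | hω
    · simp [← h0]
    · exact mul_le_mul_of_nonneg_left (Real.logb_le_logb_of_le one_lt_two
        (pr_pos hp (fun ω => (Y ω, Z ω)) hω) (pr_prod_le hp Y Z _ _)) hω.le
  rw [ent_eq_neg_sum, ent_eq_neg_sum, neg_inj, sum_eq_sum_iff_of_le hle] at h
  intro ω ω' hω hω' hY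
  have hlog := mul_left_cancel₀ hω'.ne' (h ω' (mem_univ ω'))
  have hpr := Real.logb_injOn_pos one_lt_two
    (pr_pos hp (fun ω => (Y ω, Z ω)) hω') (pr_pos hp Y hω') hlog
  exact eq_of_pr_prod_eq hp hpr hω hY

theorem independent_of_ent_prod_eq_add [Finite S] [Finite T] {p : Ω → ℝ}
    (hp : p ∈ stdSimplex ℝ Ω) {Y : Ω → S} {Z : Ω → T}
    (h : ent p (fun ω => (Y ω, Z ω)) = ent p Y + ent p Z) : Independent p Y Z := by
  cases nonempty_fintype S
  cases nonempty_fintype T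
  set W : Ω → S × T := fun ω => (Y ω, Z ω)
  have hW := pr_mem_stdSimplex hp W
  have hY := pr_mem_stdSimplex hp Y
  have hZ := pr_mem_stdSimplex hp Z
  suffices pr p W = fun st => pr p Y st.1 * pr p Z st.2 from fun s t => congrFun this (s, t)
  refine eq_of_gibbs_equality one_lt_two hW.1 (fun st => mul_nonneg (hY.1 _) (hZ.1 _)) ?_ ?_ ?_
  · intro st hst
    refine (not_lt.1 fun hpos => ?_).antisymm (hW.1 st)
    obtain ⟨ω, hω, rfl⟩ := exists_pos_of_pr_pos hpos
    exact (mul_pos (pr_pos hp.1 Y hω) (pr_pos hp.1 Z hω)).ne' hst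
  · rw [hW.2, Fintype.sum_prod_type, ← sum_mul_sum, hY.2, hZ.2, mul_one]
  · rw [sum_pr_mul p W fun st => Real.logb 2 (pr p Y st.1 * pr p Z st.2),
      sum_pr_mul p W fun st => Real.logb 2 (pr p W st), ← neg_inj, ← ent_eq_neg_sum, h,
      ent_eq_neg_sum, ent_eq_neg_sum, ← neg_add, ← sum_add_distrib]
    congr 1
    refine sum_congr rfl fun ω _ => ?_
    rcases (hp.1 ω).eq_or_lt with h0 | hω
    · simp [← h0]
    · rw [Real.logb_mul (pr_pos hp.1 Y hω).ne' (pr_pos hp.1 Z hω).ne', mul_add]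

/-- The law of a pair of independent draws from `p` and `q`. -/
def prodLaw (p : Ω → ℝ) (q : Ω' → ℝ) (x : Ω × Ω') : ℝ := p x.1 * q x.2

theorem prodLaw_mem_stdSimplex {p : Ω → ℝ} {q : Ω' → ℝ} (hp : p ∈ stdSimplex ℝ Ω)
    (hq : q ∈ stdSimplex ℝ Ω') : prodLaw p q ∈ stdSimplex ℝ (Ω × Ω') :=
  ⟨fun _ => mul_nonneg (hp.1 _) (hq.1 _), by
    simp only [prodLaw, Fintype.sum_prod_type, ← sum_mul_sum, hp.2, hq.2, mul_one]⟩

theorem pr_prodLaw_map (p : Ω → ℝ) (q : Ω' → ℝ) (Y : Ω → S) (Z : Ω' → T) (s : S) (t : T) :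
    pr (prodLaw p q) (Prod.map Y Z) (s, t) = pr p Y s * pr q Z t := by
  simp only [pr, prodLaw, sum_mul_sum, Fintype.sum_prod_type]
  refine sum_congr rfl fun ω _ => sum_congr rfl fun ω' _ => ?_
  by_cases hY : Y ω = s <;> by_cases hZ : Z ω' = t <;> simp [hY, hZ]

theorem ent_prodLaw_map {p : Ω → ℝ} {q : Ω' → ℝ} (hp : p ∈ stdSimplex ℝ Ω)
    (hq : q ∈ stdSimplex ℝ Ω') (Y : Ω → S) (Z : Ω' → T) :
    ent (prodLaw p q) (Prod.map Y Z) = ent p Y + ent q Z := by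
  have hterm (ω ω') : p ω * q ω' * Real.logb 2 (pr p Y (Y ω) * pr q Z (Z ω')) =
      p ω * Real.logb 2 (pr p Y (Y ω)) * q ω' + p ω * (q ω' * Real.logb 2 (pr q Z (Z ω'))) := by
    rcases (hp.1 ω).eq_or_lt with h0 | hω
    · simp [← h0]
    rcases (hq.1 ω').eq_or_lt with h0 | hω'
    · simp [← h0]
    rw [Real.logb_mul (pr_pos hp.1 Y hω).ne' (pr_pos hq.1 Z hω').ne']
    ring
  simp only [ent_eq_neg_sum, Fintype.sum_prod_type, Prod.map_apply, pr_prodLaw_map]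
  simp only [prodLaw, hterm, sum_add_distrib, ← sum_mul_sum, hp.2, hq.2, mul_one, one_mul, neg_add]

theorem continuous_ent_id [DecidableEq Ω] : Continuous fun q : Ω → ℝ => ent q id := by
  simp only [ent_eq_sum_negMulLog, pr_id]
  fun_prop

theorem exists_mem_stdSimplex_ent_id_eq [Nonempty Ω] [DecidableEq Ω] {c : ℝ} (hc : 0 ≤ c)
    (hc' : c ≤ Real.logb 2 (Fintype.card Ω)) : ∃ q ∈ stdSimplex ℝ Ω, ent q id = c := by
  obtain ⟨ω₀⟩ := ‹Nonempty Ω›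
  have hdirac : ent (Pi.single ω₀ 1 : Ω → ℝ) id = 0 := by
    simp [ent_eq_neg_sum, pr_id, Pi.single_apply]
  refine (convex_stdSimplex ℝ Ω).isPreconnected.intermediate_value (single_mem_stdSimplex ℝ ω₀)
    uniformLaw_mem_stdSimplex continuous_ent_id.continuousOn ⟨?_, ?_⟩
  · rwa [hdirac]
  · rwa [ent_uniformLaw_id]

theorem ent_fst_add_map_snd {G K : Type} [AddGroup G] [Fintype G] [DecidableEq G] [Fintype K]
    {q : K → ℝ} (hq : ∑ k, q k = 1) (f : K → G) :
    ent (prodLaw (uniformLaw G) q) (fun x => x.1 + f x.2) =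
      Real.logb 2 (Fintype.card G) := by
  rw [← ent_uniformLaw_id]
  refine ent_eq_ent_id_of_pr_eq (funext fun g => ?_)
  simp only [pr, prodLaw, uniformLaw, Fintype.sum_prod_type_right, ← eq_sub_iff_add_eq]
  simp [← mul_sum, hq]

theorem ent_prodLaw_snd {p : Ω → ℝ} (hp : ∑ ω, p ω = 1) [DecidableEq Ω'] (q : Ω' → ℝ) :
    ent (prodLaw p q) Prod.snd = ent q id := by
  refine ent_eq_ent_id_of_pr_eq (funext fun ω' => ?_)
  simp [pr, prodLaw, Fintype.sum_prod_type, ← sum_mul, hp]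

end Entropy

section Necessity

variable {Ω S T R : Type} [Fintype Ω]
  [DecidableEq S] [DecidableEq T] [DecidableEq R]
  {p : Ω → ℝ} {X : Ω → S} {Y : Ω → T} {Z : Ω → R}

theorem card_supp_mul_pr_le_one [Fintype R] (hp : p ∈ stdSimplex ℝ Ω)
    (hXZ : Independent p X Z) (hYZ : Independent p Y Z)
    (hXY_Z : Determines p (fun ω => (X ω, Y ω)) Z) (hXZ_Y : Determines p (fun ω => (X ω, Z ω)) Y)
    (hYZ_X : Determines p (fun ω => (Y ω, Z ω)) X) {ω : Ω} (hω : 0 < p ω) :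
    #(supp p Z) * pr p X (X ω) ≤ 1 := by
  have hlift : ∀ z ∈ supp p Z, ∃ ω', 0 < p ω' ∧ (X ω', Z ω') = (X ω, z) := fun z hz =>
    exists_pos_of_pr_pos (Y := fun ω => (X ω, Z ω))
      ((hXZ _ _).symm ▸ mul_pos (pr_pos hp.1 X hω) (mem_supp.1 hz))
  have : Nonempty Ω := ⟨ω⟩
  choose! g hg_pos hg using hlift
  simp only [Prod.mk.injEq] at hg
  have hpr (z) (hz : z ∈ supp p Z) : pr p X (X ω) = pr p Y (Y (g z)) := by
    rw [← (hg z hz).1]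
    exact pr_eq_pr_of_independent_of_determines hp.1 hXZ hYZ hXZ_Y hYZ_X (hg_pos z hz)
  have hinj : Set.InjOn (fun z => Y (g z)) (supp p Z) := fun z hz z' hz' hY => by
    rw [← (hg z hz).2, ← (hg z' hz').2]
    exact hXY_Z (hg_pos z hz) (hg_pos z' hz')
      (Prod.ext ((hg z hz).1.trans (hg z' hz').1.symm) hY)
  calc #(supp p Z) * pr p X (X ω) = ∑ z ∈ supp p Z, pr p Y (Y (g z)) := by
        rw [← sum_congr rfl hpr, sum_const, nsmul_eq_mul]
    _ = ∑ y ∈ (supp p Z).image fun z => Y (g z), pr p Y y := (sum_image hinj).symm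
    _ ≤ ∑ ω, p ω := sum_pr_le hp.1 Y _
    _ = 1 := hp.2

theorem logb_ceil_rpow_ent_le_ent [Finite R] (hp : p ∈ stdSimplex ℝ Ω)
    (hXZ : Independent p X Z) (hYZ : Independent p Y Z)
    (hXY_Z : Determines p (fun ω => (X ω, Y ω)) Z) (hXZ_Y : Determines p (fun ω => (X ω, Z ω)) Y)
    (hYZ_X : Determines p (fun ω => (Y ω, Z ω)) X) :
    Real.logb 2 (⌈(2 : ℝ) ^ ent p Z⌉ : ℤ) ≤ ent p X := by
  cases nonempty_fintype R
  have hcard : (0 : ℝ) < #(supp p Z) := by exact_mod_cast (supp_nonempty hp Z).card_pos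
  have hrpow : (2 : ℝ) ^ ent p Z ≤ #(supp p Z) :=
    (Real.le_logb_iff_rpow_le one_lt_two hcard).1 (ent_le_logb_card_supp hp Z)
  have hceil : ⌈(2 : ℝ) ^ ent p Z⌉ ≤ (#(supp p Z) : ℤ) := Int.ceil_le.2 (by exact_mod_cast hrpow)
  have hceil_pos : 0 < ⌈(2 : ℝ) ^ ent p Z⌉ := Int.ceil_pos.2 (by positivity)
  calc Real.logb 2 (⌈(2 : ℝ) ^ ent p Z⌉ : ℤ) ≤ Real.logb 2 #(supp p Z) :=
        Real.logb_le_logb_of_le one_lt_two (by exact_mod_cast hceil_pos) (by exact_mod_cast hceil)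
    _ ≤ ent p X := logb_le_ent hp hcard fun ω hω =>
        card_supp_mul_pr_le_one hp hXZ hYZ hXY_Z hXZ_Y hYZ_X hω

end Necessity

theorem isEntropic_ent {n : ℕ} {Ω : Type} [Fintype Ω] {R : Fin n → Type} [∀ i, Finite (R i)]
    [∀ i, DecidableEq (R i)] {p : Ω → ℝ} (hp : p ∈ stdSimplex ℝ Ω) (X : ∀ i, Ω → R i) :
    IsEntropic n fun A => ent p fun ω (i : A) => X i ω := by
  have := fun i => Fintype.ofFinite (R i)
  let V (ω : Ω) (i : Fin n) : Fin (Fintype.card (R i)) := Fintype.equivFin (R i) (X i ω)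
  obtain ⟨hpr, hpr_sum⟩ := pr_mem_stdSimplex hp V
  refine ⟨_, pr p V, hpr, hpr_sum, fun A => ?_⟩
  rw [ent_pr]
  exact ent_congr p fun ω ω' => by simp [funext_iff, V]

theorem IsEntropic.add {n : ℕ} {h h' : Finset (Fin n) → ℝ} (hh : IsEntropic n h)
    (hh' : IsEntropic n h') : IsEntropic n (h + h') := by
  obtain ⟨m, p, hp_nonneg, hp_sum, hH⟩ := hh
  obtain ⟨m', p', hp_nonneg', hp_sum', hH'⟩ := hh'
  have hp : p ∈ stdSimplex ℝ _ := ⟨hp_nonneg, hp_sum⟩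
  have hp' : p' ∈ stdSimplex ℝ _ := ⟨hp_nonneg', hp_sum'⟩
  convert isEntropic_ent (prodLaw_mem_stdSimplex hp hp')
    (fun i x => (x.1 i, x.2 i)) with A
  rw [Pi.add_apply, hH, hH', ← ent_prodLaw_map hp hp']
  exact ent_congr _ fun x y => by
    simp [Prod.ext_iff, funext_iff, forall_and]

theorem rkU_eq_natCast {k r : ℕ} {A B : Finset (Fin 4)} (h : min k #(A ∩ B) = r) :
    rkU k B A = r := by
  rw [rkU, ← h, Nat.cast_min]

theorem rkU_inter_of_subset {k : ℕ} {A B C : Finset (Fin 4)} (h : B ⊆ C) :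
    rkU k B (A ∩ C) = rkU k B A := by
  rw [rkU, rkU, inter_assoc, inter_eq_right.2 h]

theorem logb_ceil_le_of_isEntropic {a b : ℝ}
    (h : IsEntropic 4 fun A => a * rkU 2 {0, 1, 2} A + b * rkU 1 {0, 1} A) :
    Real.logb 2 (⌈(2 : ℝ) ^ a⌉ : ℤ) ≤ a + b := by
  obtain ⟨m, p, hp_nonneg, hp_sum, hH⟩ := h
  have hp : p ∈ stdSimplex ℝ _ := ⟨hp_nonneg, hp_sum⟩
  have hent {S : Type} [DecidableEq S] (A : Finset (Fin 4)) (r₁ r₂ : ℕ)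
      {Z : (∀ i, Fin (m i)) → S} (hZ : ∀ x y, (∀ i ∈ A, x i = y i) ↔ Z x = Z y)
      (hr₁ : min 2 #(A ∩ {0, 1, 2}) = r₁) (hr₂ : min 1 #(A ∩ {0, 1}) = r₂) :
      ent p Z = a * r₁ + b * r₂ := by
    rw [← ent_restrict_congr p (fun i x => x i) hZ, ← hH A]
    simp only [rkU_eq_natCast hr₁, rkU_eq_natCast hr₂]
  have h0 : ent p (fun x => x 0) = a + b := by
    simpa using hent {0} 1 1 (by simp) (by decide) (by decide)
  have h1 : ent p (fun x => x 1) = a + b := by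
    simpa using hent {1} 1 1 (by simp) (by decide) (by decide)
  have h2 : ent p (fun x => x 2) = a := by
    simpa using hent {2} 1 0 (by simp) (by decide) (by decide)
  have h01 := hent {0, 1} 2 1 (Z := fun x => (x 0, x 1)) (by simp) (by decide) (by decide)
  have h02 := hent {0, 2} 2 1 (Z := fun x => (x 0, x 2)) (by simp) (by decide) (by decide)
  have h12 := hent {1, 2} 2 1 (Z := fun x => (x 1, x 2)) (by simp) (by decide) (by decide)
  have h01_2 := hent {0, 1, 2} 2 1 (Z := fun x => ((x 0, x 1), x 2)) (by simp [and_assoc])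
    (by decide) (by decide)
  have h02_1 := hent {0, 2, 1} 2 1 (Z := fun x => ((x 0, x 2), x 1)) (by simp [and_assoc])
    (by decide) (by decide)
  have h12_0 := hent {1, 2, 0} 2 1 (Z := fun x => ((x 1, x 2), x 0)) (by simp [and_assoc])
    (by decide) (by decide)
  rw [← h0]
  nth_rw 1 [← h2]
  exact logb_ceil_rpow_ent_le_ent hp
    (independent_of_ent_prod_eq_add hp (by rw [h02, h0, h2]; push_cast; ring))
    (independent_of_ent_prod_eq_add hp (by rw [h12, h1, h2]; push_cast; ring))
    (determines_of_ent_prod_eq hp_nonneg (h01_2.trans h01.symm))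
    (determines_of_ent_prod_eq hp_nonneg (h02_1.trans h02.symm))
    (determines_of_ent_prod_eq hp_nonneg (h12_0.trans h12.symm))

section Sufficiency

theorem isEntropic_mul_rkU_one (B : Finset (Fin 4)) {c : ℝ} (hc : 0 ≤ c) :
    IsEntropic 4 fun A => c * rkU 1 B A := by
  obtain ⟨k, hk⟩ := exists_nat_ge ((2 : ℝ) ^ c)
  have hck : c ≤ Real.logb 2 (Fintype.card (Fin (k + 1))) := by
    rw [Fintype.card_fin, Real.le_logb_iff_rpow_le one_lt_two (by positivity)]
    push_cast
    linarith
  obtain ⟨q, hq, hqc⟩ := exists_mem_stdSimplex_ent_id_eq hc hck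
  let X (i : Fin 4) (w : Fin (k + 1)) : Fin (k + 1) := if i ∈ B then w else 0
  convert isEntropic_ent hq X with A
  rcases (A ∩ B).eq_empty_or_nonempty with hAB | ⟨i, hi⟩
  · have hconst (w w') : (∀ i ∈ A, X i w = X i w') ↔ () = () :=
      iff_of_true (fun i hA => by simp [X, disjoint_left.1 (disjoint_iff_inter_eq_empty.2 hAB) hA])
        rfl
    rw [ent_restrict_congr q X hconst, ent_const hq.2, rkU_eq_natCast (r := 0) (by simp [hAB]),
      Nat.cast_zero, mul_zero]
  · obtain ⟨hiA, hiB⟩ := mem_inter.1 hi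
    have hinj (w w') : (∀ i ∈ A, X i w = X i w') ↔ id w = id w' :=
      ⟨fun h => by simpa [X, hiB] using h i hiA, fun h _ _ => congrArg _ h⟩
    rw [ent_restrict_congr q X hinj, hqc,
      rkU_eq_natCast (r := 1) (min_eq_left (card_pos.2 ⟨i, hi⟩)), Nat.cast_one, mul_one]

variable {G : Type} [AddGroup G]

/-- The random vector `(U, U + V, V, 0)` on the sample space of pairs `(U, V)`. -/
def sumVector (i : Fin 4) (x : G × G) : G := ![x.1, x.1 + x.2, x.2, 0] i

theorem sumVector_ext {i j : Fin 4} (hij : i ≠ j) (hi : i ∈ ({0, 1, 2} : Finset (Fin 4)))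
    (hj : j ∈ ({0, 1, 2} : Finset (Fin 4))) {x y : G × G} (hxi : sumVector i x = sumVector i y)
    (hxj : sumVector j x = sumVector j y) : x = y := by
  simp only [mem_insert, mem_singleton] at hi hj
  rcases hi with rfl | rfl | rfl <;> rcases hj with rfl | rfl | rfl <;>
    simp_all [sumVector, Prod.ext_iff]

variable [Fintype G] [DecidableEq G] {q : G → ℝ}

theorem ent_sumVector_of_one_lt_card (hq : q ∈ stdSimplex ℝ G) {A : Finset (Fin 4)}
    (hA : A ⊆ {0, 1, 2}) (hcard : 1 < #A) :
    ent (prodLaw (uniformLaw G) q) (fun x (i : A) => sumVector i x) =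
      Real.logb 2 (Fintype.card G) + ent q id := by
  obtain ⟨i, hi, j, hj, hij⟩ := one_lt_card.1 hcard
  have hinj (x y : G × G) : (∀ i ∈ A, sumVector i x = sumVector i y) ↔
      Prod.map id id x = Prod.map id id y :=
    ⟨fun h => sumVector_ext hij (hA hi) (hA hj) (h i hi) (h j hj), fun h _ _ => congrArg _ h⟩
  rw [ent_restrict_congr _ sumVector hinj, ent_prodLaw_map uniformLaw_mem_stdSimplex hq,
    ent_uniformLaw_id]

theorem ent_sumVector (hq : q ∈ stdSimplex ℝ G) {A : Finset (Fin 4)} (hA : A ⊆ {0, 1, 2}) :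
    ent (prodLaw (uniformLaw G) q) (fun x (i : A) => sumVector i x) =
      ent q id * rkU 2 {0, 1, 2} A +
        (Real.logb 2 (Fintype.card G) - ent q id) * rkU 1 {0, 1} A := by
  have hu : uniformLaw G ∈ stdSimplex ℝ G := uniformLaw_mem_stdSimplex
  have h0 : ent (prodLaw (uniformLaw G) q) (sumVector 0) = Real.logb 2 (Fintype.card G) := by
    rw [← ent_fst_add_map_snd hq.2 fun _ => (0 : G)]
    exact ent_congr _ (by simp [sumVector])
  have h1 : ent (prodLaw (uniformLaw G) q) (sumVector 1) = Real.logb 2 (Fintype.card G) :=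
    ent_fst_add_map_snd hq.2 id
  have h2 : ent (prodLaw (uniformLaw G) q) (sumVector 2) = ent q id := ent_prodLaw_snd hu.2 q
  have hsingle (i : Fin 4) : ent (prodLaw (uniformLaw G) q)
      (fun x (j : ({i} : Finset (Fin 4))) => sumVector j x) = ent _ (sumVector i) :=
    ent_restrict_congr _ sumVector (by simp)
  rcases lt_or_ge 1 #A with hcard | hcard
  · have hranks : min 2 #(A ∩ {0, 1, 2}) = 2 ∧ min 1 #(A ∩ {0, 1}) = 1 := by decide +revert
    rw [ent_sumVector_of_one_lt_card hq hA hcard, rkU_eq_natCast hranks.1,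
      rkU_eq_natCast hranks.2]
    push_cast
    ring
  have hsmall : A = ∅ ∨ A = {0} ∨ A = {1} ∨ A = {2} := by decide +revert
  rcases hsmall with rfl | rfl | rfl | rfl
  · rw [ent_restrict_congr _ (sumVector (G := G)) (Z := fun _ => ()) (by simp),
      ent_const (prodLaw_mem_stdSimplex hu hq).2]
    simp [rkU]
  · rw [hsingle, h0, rkU_eq_natCast (r := 1) rfl, rkU_eq_natCast (r := 1) rfl]
    simp
  · rw [hsingle, h1, rkU_eq_natCast (r := 1) rfl, rkU_eq_natCast (r := 1) rfl]
    simp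
  · rw [hsingle, h2, rkU_eq_natCast (r := 1) rfl, rkU_eq_natCast (r := 0) rfl]
    simp

theorem isEntropic_of_addGroup (hq : q ∈ stdSimplex ℝ G) :
    IsEntropic 4 fun A => ent q id * rkU 2 {0, 1, 2} A +
      (Real.logb 2 (Fintype.card G) - ent q id) * rkU 1 {0, 1} A := by
  convert isEntropic_ent (prodLaw_mem_stdSimplex uniformLaw_mem_stdSimplex hq)
    (sumVector (G := G)) with A
  have hloop (x y : G × G) : (∀ i ∈ A, sumVector i x = sumVector i y) ↔
      (fun i : ↥(A ∩ {0, 1, 2}) => sumVector i.1 x) =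
        fun i : ↥(A ∩ {0, 1, 2}) => sumVector i.1 y := by
    simp [sumVector, funext_iff, Fin.forall_fin_succ]
  rw [ent_restrict_congr _ sumVector hloop, ent_sumVector hq inter_subset_right,
    rkU_inter_of_subset (Subset.refl _), rkU_inter_of_subset (by decide)]

end Sufficiency

theorem isEntropic_of_logb_ceil_le {a b : ℝ} (ha : 0 ≤ a)
    (hab : Real.logb 2 (⌈(2 : ℝ) ^ a⌉ : ℤ) ≤ a + b) :
    IsEntropic 4 fun A => a * rkU 2 {0, 1, 2} A + b * rkU 1 {0, 1} A := by
  set n := ⌈(2 : ℝ) ^ a⌉₊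
  rw [← natCast_ceil_eq_intCast_ceil (by positivity)] at hab
  have hn : 0 < n := Nat.ceil_pos.2 (by positivity)
  have : NeZero n := ⟨hn.ne'⟩
  have han : a ≤ Real.logb 2 n :=
    (Real.le_logb_iff_rpow_le one_lt_two (by exact_mod_cast hn)).2 (Nat.le_ceil _)
  obtain ⟨q, hq, hqa⟩ := exists_mem_stdSimplex_ent_id_eq (Ω := ZMod n) ha (by rwa [ZMod.card])
  convert (isEntropic_of_addGroup hq).add (isEntropic_mul_rkU_one {0, 1} (sub_nonneg.2 hab)) with A
  rw [Pi.add_apply, hqa, ZMod.card]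
  ring

/-- Theorem 2 for the face (U^{123}_{2,3}, U^{12}_{1,2}):
h = a·r₁ + b·r₂ (a, b ≥ 0) is entropic iff a + b ≥ log₂⌈2^a⌉. -/
theorem face_U123_23_U12_12 (a b : ℝ) (ha : 0 ≤ a) (hb : 0 ≤ b) :
    IsEntropic 4
      (fun A => a * rkU 2 ({0,1,2} : Finset (Fin 4)) A +
                b * rkU 1 ({0,1} : Finset (Fin 4)) A)
    ↔ Real.logb 2 ((⌈(2 : ℝ) ^ a⌉ : ℤ) : ℝ) ≤ a + b :=
  ⟨logb_ceil_le_of_isEntropic, isEntropic_of_logb_ceil_le ha⟩
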